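/- Let p be a prime, let S ⊆ F_p^2 be a set of seven distinct points, and let q ∈ F_p^2 with q ∉ S. If the eight points S ∪ {q} all lie on a common irreducible cubic curve, then the F_p-vector space of polynomials in F_p[X,Y] of total degree at most 3 that vanish at every point of S ∪ {q} has dimension exactly 2 (as a subspace of the 10-dimensional space of all polynomials of total degree at most 3). Equivalently, the hyperplane of cubic coefficient vectors determined by q does not contain the 2-flat of cubics through S. -/

import Mathlib

/-!
Let `T` consist of eight zeros of an irreducible cubic. The claim is that `T` imposes independent
conditions on cubics, so that the dimension drops from `10` to `10 - 8`. Restricting to a line `ℓ`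
carrying `k ≤ d + 2` points of `T` gives univariate polynomials of degree at most `d + 1` with `k`
prescribed zeros, and the kernel is `ℓ` times the polynomials of degree at most `d` vanishing on
`T \ ℓ`; hence independence for `T \ ℓ` in degree `d` implies independence for `T` in degree
`d + 1`. Peeling off lines through as many points as possible shows that `2 * d + 1` points, no
`d + 2` of them collinear, impose independent conditions in degree `d`.

An irreducible cubic contains no four collinear points. Nor does a conic contain seven of its
points: the multiples of the conic by linear polynomials would exhaust the `10 - 7 = 3` dimensions
of cubics through them, and so include the irreducible cubic itself. If some line contains three
points of `T`, removing the fullest one leaves at most five points, to which the previous count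
applies; were four of them collinear, `T` would lie on a pair of lines. Otherwise, take two points
`P` and `Q` of `T`. If the six remaining points lie on no conic, they impose independent conditions
on conics, and removing the line `PQ` suffices. If they lie on a conic, it misses `P` or `Q`, say
`P`; its product with a line through `Q` but not `P` separates `P` from the seven other points,
which already impose independent conditions.
-/

open scoped Classical

noncomputable section

def zeroSet {p : ℕ} (f : MvPolynomial (Fin 2) (ZMod p)) : Set (Fin 2 → ZMod p) :=
  {x | MvPolynomial.eval x f = 0}

def IsIrredCubic {p : ℕ} (γ : Set (Fin 2 → ZMod p)) : Prop :=
  ∃ f : MvPolynomial (Fin 2) (ZMod p), Irreducible f ∧ f.totalDegree = 3 ∧ γ = zeroSet f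

/-- The space of polynomials of total degree at most 3 vanishing at every point of `S`. -/
def vanishingCubics (p : ℕ) (S : Finset (Fin 2 → ZMod p)) :
    Submodule (ZMod p) (MvPolynomial (Fin 2) (ZMod p)) :=
  MvPolynomial.restrictTotalDegree (Fin 2) (ZMod p) 3 ⊓
    ⨅ q ∈ S, LinearMap.ker (MvPolynomial.aeval (R := ZMod p) q).toLinearMap

open MvPolynomial Module
open scoped Finset

section VanishingSpace

variable {σ F : Type*} [Field F]

/-- The space of polynomials of total degree at most `d` vanishing at every point of `T`;
`vanishingCubics` is the case `d = 3` in the plane over `ZMod p`. -/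
def vanishingSpace (d : ℕ) (T : Finset (σ → F)) : Submodule F (MvPolynomial σ F) :=
  restrictTotalDegree σ F d ⊓ ⨅ x ∈ T, LinearMap.ker (aeval (R := F) x).toLinearMap

theorem mem_vanishingSpace {d : ℕ} {T : Finset (σ → F)} {f : MvPolynomial σ F} :
    f ∈ vanishingSpace d T ↔ f.totalDegree ≤ d ∧ ∀ x ∈ T, eval x f = 0 := by
  simp [vanishingSpace, mem_restrictTotalDegree, Submodule.mem_iInf, aeval_eq_eval]

theorem vanishingSpace_empty (d : ℕ) :
    vanishingSpace d (∅ : Finset (σ → F)) = restrictTotalDegree σ F d := by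
  simp [vanishingSpace]

theorem vanishingSpace_anti {d : ℕ} {A T : Finset (σ → F)} (h : A ⊆ T) :
    vanishingSpace d T ≤ vanishingSpace d A := fun _ hf =>
  mem_vanishingSpace.mpr ⟨(mem_vanishingSpace.mp hf).1,
    fun x hx => (mem_vanishingSpace.mp hf).2 x (h hx)⟩

theorem mul_mem_vanishingSpace {d e : ℕ} {T : Finset (σ → F)} {f g : MvPolynomial σ F}
    (hf : f.totalDegree ≤ d) (hg : g.totalDegree ≤ e)
    (h : ∀ x ∈ T, eval x f = 0 ∨ eval x g = 0) : f * g ∈ vanishingSpace (d + e) T :=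
  mem_vanishingSpace.mpr ⟨(totalDegree_mul f g).trans (add_le_add hf hg),
    fun x hx => by rw [map_mul, mul_eq_zero]; exact h x hx⟩

theorem totalDegree_X_sub_C_le (i : σ) (a : F) : (X i - C a : MvPolynomial σ F).totalDegree ≤ 1 :=
  (totalDegree_sub_C_le _ _).trans (totalDegree_X i).le

theorem totalDegree_pos_of_eval_eq_zero {f : MvPolynomial σ F} (hf : f ≠ 0) {x : σ → F}
    (hx : eval x f = 0) : 0 < f.totalDegree := by
  refine Nat.pos_of_ne_zero fun h0 => hf ?_
  rw [totalDegree_eq_zero_iff_eq_C] at h0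
  rw [h0, eval_C] at hx
  rw [h0, hx, C_0]

theorem not_dvd_of_irreducible {f g : MvPolynomial σ F} (hf : Irreducible f)
    (hlt : g.totalDegree < f.totalDegree) {x : σ → F} (hx : eval x g = 0) : ¬ g ∣ f := by
  intro hgf
  rcases hf.dvd_iff.mp hgf with hunit | hassoc
  · exact (hunit.map (eval x)).ne_zero hx
  · exact hlt.not_ge <|
      totalDegree_le_of_dvd_of_isDomain hassoc.dvd (ne_zero_of_dvd_ne_zero hf.ne_zero hgf)

theorem finrank_map_add_finrank_inf_ker {V V' : Type*} [AddCommGroup V] [Module F V]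
    [AddCommGroup V'] [Module F V'] (W : Submodule F V) [FiniteDimensional F W] (φ : V →ₗ[F] V') :
    finrank F (W.map φ) + finrank F (W ⊓ LinearMap.ker φ : Submodule F V) = finrank F W := by
  rw [← LinearMap.finrank_range_add_finrank_ker (φ.domRestrict W), LinearMap.range_domRestrict,
    LinearMap.ker_domRestrict, ← Submodule.map_comap_subtype, Submodule.finrank_map_subtype_eq]

theorem finrank_restrictTotalDegree [Fintype σ] (d : ℕ) :
    finrank F (restrictTotalDegree σ F d) = (d + Fintype.card σ).choose (Fintype.card σ) := by
  have hdegrees : {n : σ →₀ ℕ | (n.sum fun _ e => e) ≤ d} =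
      ((Finset.range (d + 1)).biUnion fun i => Finset.univ.finsuppAntidiag i :
        Finset (σ →₀ ℕ)) := by
    ext n
    simp [Finset.mem_finsuppAntidiag, Finsupp.sum_fintype]
  rw [restrictTotalDegree, finrank_eq_nat_card_basis (basisRestrictSupport F _), hdegrees,
    Nat.card_coe_set_eq, Set.ncard_coe_finset, Finset.card_biUnion, ← Nat.sum_range_multichoose]
  · simp only [Finset.card_finsuppAntidiag_nat_eq_multichoose, Finset.card_univ]
  · intro i _ j _ hij
    refine Finset.disjoint_left.mpr fun n hi hj => hij ?_
    rw [← (Finset.mem_finsuppAntidiag.mp hi).1, ← (Finset.mem_finsuppAntidiag.mp hj).1]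

/-- The points of `T` impose independent conditions on polynomials of total degree at most `d`:
each of them lowers the dimension by one. -/
def ImposesIndependentConditions (d : ℕ) (T : Finset (σ → F)) : Prop :=
  finrank F (vanishingSpace d T) + #T = finrank F (restrictTotalDegree σ F d)

protected theorem ImposesIndependentConditions.empty (d : ℕ) :
    ImposesIndependentConditions d (∅ : Finset (σ → F)) := by
  rw [ImposesIndependentConditions, vanishingSpace_empty, Finset.card_empty, add_zero]

variable [Finite σ]

instance (d : ℕ) (T : Finset (σ → F)) : FiniteDimensional F (vanishingSpace d T) :=
  Submodule.finiteDimensional_of_le (S₂ := restrictTotalDegree σ F d) inf_le_left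

theorem finrank_restrictTotalDegree_le_add_card (d : ℕ) (T : Finset (σ → F)) :
    finrank F (restrictTotalDegree σ F d) ≤ finrank F (vanishingSpace d T) + #T := by
  let evalAt : MvPolynomial σ F →ₗ[F] (T → F) :=
    LinearMap.pi fun x => (aeval (R := F) x.1).toLinearMap
  have hker : restrictTotalDegree σ F d ⊓ LinearMap.ker evalAt ≤ vanishingSpace d T := by
    rintro f ⟨hf, hf0⟩
    refine mem_vanishingSpace.mpr ⟨(mem_restrictTotalDegree σ d f).mp hf, fun x hx => ?_⟩
    simpa [evalAt, aeval_eq_eval] using congrFun hf0 ⟨x, hx⟩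
  have hrange := Submodule.finrank_le ((restrictTotalDegree σ F d).map evalAt)
  rw [finrank_fintype_fun_eq_card, Fintype.card_coe] at hrange
  have := finrank_map_add_finrank_inf_ker (restrictTotalDegree σ F d) evalAt
  have := Submodule.finrank_mono hker
  omega

namespace ImposesIndependentConditions

variable {d e : ℕ} {T : Finset (σ → F)} {c f : MvPolynomial σ F} {P Q : σ → F}

theorem of_le (h : finrank F (vanishingSpace d T) + #T ≤ finrank F (restrictTotalDegree σ F d)) :
    ImposesIndependentConditions d T :=
  h.antisymm (finrank_restrictTotalDegree_le_add_card d T)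

protected theorem insert [DecidableEq (σ → F)] (h : ImposesIndependentConditions d T)
    (hf : f ∈ vanishingSpace d T) (hP : eval P f ≠ 0) :
    ImposesIndependentConditions d (insert P T) := by
  have hlt : vanishingSpace d (insert P T) < vanishingSpace d T :=
    lt_of_le_of_ne (vanishingSpace_anti (Finset.subset_insert P T)) fun heq =>
      hP ((mem_vanishingSpace.mp (heq ▸ hf)).2 P (Finset.mem_insert_self P T))
  have := Submodule.finrank_lt_finrank_of_lt hlt
  have := Finset.card_insert_le P T
  rw [ImposesIndependentConditions] at h
  exact of_le (by omega)

theorem of_vanishingSpace_eq_bot (h : vanishingSpace d T = ⊥)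
    (hT : #T ≤ finrank F (restrictTotalDegree σ F d)) : ImposesIndependentConditions d T :=
  of_le (by rwa [h, finrank_bot, zero_add])

theorem of_card_le_one (d : ℕ) (hT : #T ≤ 1) : ImposesIndependentConditions d T := by
  rcases T.eq_empty_or_nonempty with rfl | ⟨P, hP⟩
  · exact .empty d
  · have hsingleton : T = {P} :=
      Finset.eq_singleton_iff_unique_mem.mpr ⟨hP, fun x hx => Finset.card_le_one.mp hT x hx P hP⟩
    rw [hsingleton, ← Finset.insert_empty]
    exact .insert (f := 1) (.empty d) (mem_vanishingSpace.mpr (by simp)) (by simp)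

/-- Multiplying `c` by a hyperplane through `Q` but not `P` gives a polynomial that would separate
`P` from the rest of `T`. -/
theorem eval_eq_zero_of_erase [DecidableEq (σ → F)] (hPT : P ∈ T) (hPQ : P ≠ Q)
    (h : ImposesIndependentConditions (d + 1) (T.erase P))
    (hT : ¬ ImposesIndependentConditions (d + 1) T) (hc : c ∈ vanishingSpace d (T \ {P, Q})) :
    eval P c = 0 := by
  obtain ⟨i, hi⟩ := Function.ne_iff.mp hPQ
  obtain ⟨hdeg, hzero⟩ := mem_vanishingSpace.mp hc
  have hmem : c * (X i - C (Q i)) ∈ vanishingSpace (d + 1) (T.erase P) := by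
    refine mul_mem_vanishingSpace hdeg (totalDegree_X_sub_C_le i (Q i)) fun x hx => ?_
    obtain ⟨hxP, hxT⟩ := Finset.mem_erase.mp hx
    by_cases hxQ : x = Q
    · exact Or.inr (by simp [hxQ])
    · exact Or.inl (hzero x (by simp [hxT, hxP, hxQ]))
  by_contra hne
  refine hT (Finset.insert_erase hPT ▸ h.insert hmem ?_)
  simpa [hne] using sub_ne_zero.mpr hi

theorem mem_vanishingSpace_of_erase [DecidableEq (σ → F)] (hPT : P ∈ T) (hQT : Q ∈ T) (hPQ : P ≠ Q)
    (hP : ImposesIndependentConditions (d + 1) (T.erase P))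
    (hQ : ImposesIndependentConditions (d + 1) (T.erase Q))
    (hT : ¬ ImposesIndependentConditions (d + 1) T) (hc : c ∈ vanishingSpace d (T \ {P, Q})) :
    c ∈ vanishingSpace d T := by
  obtain ⟨hdeg, hzero⟩ := mem_vanishingSpace.mp hc
  refine mem_vanishingSpace.mpr ⟨hdeg, fun x hx => ?_⟩
  by_cases hxP : x = P
  · exact hxP ▸ eval_eq_zero_of_erase hPT hPQ hP hT hc
  by_cases hxQ : x = Q
  · exact hxQ ▸ eval_eq_zero_of_erase hQT hPQ.symm hQ hT (Finset.pair_comm P Q ▸ hc)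
  · exact hzero x (by simp [hx, hxP, hxQ])

/-- A substitute for Bézout's theorem: the multiples of `c` already fill the space of polynomials
of degree `d + e` vanishing on `T`. -/
theorem dvd (h : ImposesIndependentConditions (d + e) T)
    (hcard : finrank F (restrictTotalDegree σ F (d + e)) ≤
      finrank F (restrictTotalDegree σ F e) + #T)
    (hc0 : c ≠ 0) (hc : c ∈ vanishingSpace d T) (hf : f ∈ vanishingSpace (d + e) T) : c ∣ f := by
  obtain ⟨hdeg, hzero⟩ := mem_vanishingSpace.mp hc
  have hle : (restrictTotalDegree σ F e).map (LinearMap.mulLeft F c) ≤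
      vanishingSpace (d + e) T := by
    rintro _ ⟨g, hg, rfl⟩
    exact mul_mem_vanishingSpace hdeg ((mem_restrictTotalDegree σ e g).mp hg)
      fun x hx => Or.inl (hzero x hx)
  have hmap := (Submodule.equivMapOfInjective (LinearMap.mulLeft F c) (mul_right_injective₀ hc0)
    (restrictTotalDegree σ F e)).finrank_eq
  rw [ImposesIndependentConditions] at h
  rw [← Submodule.eq_of_le_of_finrank_le hle (by omega)] at hf
  obtain ⟨g, -, rfl⟩ := hf
  exact dvd_mul_right c g

end ImposesIndependentConditions

end VanishingSpace

section RestrictionToLine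

variable {σ F : Type*} [Field F]

/-- Restriction of polynomials to the line through `P` and `Q`, as polynomials in the parameter of
`AffineMap.lineMap P Q`. -/
def restrictLine (P Q : σ → F) : MvPolynomial σ F →ₐ[F] Polynomial F :=
  aeval fun i => Polynomial.C (Q i - P i) * Polynomial.X + Polynomial.C (P i)

theorem natDegree_restrictLine_le (P Q : σ → F) (f : MvPolynomial σ F) :
    (restrictLine P Q f).natDegree ≤ f.totalDegree := by
  simpa [restrictLine] using aeval_natDegree_le f le_rfl
    (fun i => Polynomial.C (Q i - P i) * Polynomial.X + Polynomial.C (P i)) (n := 1)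
    (fun i => Polynomial.natDegree_linear_le)

theorem eval_restrictLine (P Q : σ → F) (f : MvPolynomial σ F) (t : F) :
    (restrictLine P Q f).eval t = eval (AffineMap.lineMap P Q t) f := by
  have hcomp : (Polynomial.aeval t).comp (restrictLine P Q)
      = aeval (R := F) (AffineMap.lineMap P Q t : σ → F) := by
    ext i
    simp [restrictLine, AffineMap.lineMap_apply, mul_comm]
  simpa [aeval_eq_eval, Polynomial.aeval_def] using DFunLike.congr_fun hcomp f

theorem exists_finset_card_eq_forall_lineMap_mem {P Q : σ → F} (hPQ : P ≠ Q)
    (T : Finset (σ → F)) :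
    ∃ s : Finset F, #s = #{x ∈ T | x ∈ line[F, P, Q]} ∧ ∀ t ∈ s, AffineMap.lineMap P Q t ∈ T := by
  have hinj : Function.Injective (AffineMap.lineMap P Q : F → σ → F) :=
    AffineMap.lineMap_injective F hPQ
  refine ⟨T.preimage _ hinj.injOn, ?_, fun t ht => Finset.mem_preimage.mp ht⟩
  rw [Finset.card_preimage]
  refine congrArg Finset.card (Finset.filter_congr fun x _ => ?_)
  exact mem_affineSpan_pair_iff_exists_lineMap_eq.symm

theorem card_le_totalDegree_of_restrictLine_ne_zero {P Q : σ → F} (hPQ : P ≠ Q)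
    {f : MvPolynomial σ F} {T : Finset (σ → F)} (hf : ∀ x ∈ T, eval x f = 0)
    (hne : restrictLine P Q f ≠ 0) : #{x ∈ T | x ∈ line[F, P, Q]} ≤ f.totalDegree := by
  obtain ⟨s, hcard, hs⟩ := exists_finset_card_eq_forall_lineMap_mem hPQ T
  rw [← hcard]
  by_contra! hlt
  exact hne <| Polynomial.eq_zero_of_natDegree_lt_card_of_eval_eq_zero' _ s
    (fun t ht => by rw [eval_restrictLine]; exact hf _ (hs t ht))
    ((natDegree_restrictLine_le P Q f).trans_lt hlt)

/-- Polynomials of degree less than `#s` form a complement to those vanishing on `s`. -/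
theorem finrank_add_card_le_of_forall_eval_eq_zero {W : Submodule F (Polynomial F)} {n : ℕ}
    {s : Finset F} (hW : W ≤ Polynomial.degreeLT F n) (hs : ∀ g ∈ W, ∀ t ∈ s, g.eval t = 0)
    (hsn : #s ≤ n) : finrank F W + #s ≤ n := by
  have hdim (m : ℕ) : finrank F (Polynomial.degreeLT F m) = m := by
    rw [(Polynomial.degreeLTEquiv F m).finrank_eq, finrank_fin_fun]
  have hinf : W ⊓ Polynomial.degreeLT F #s = ⊥ := by
    refine (Submodule.eq_bot_iff _).mpr fun g ⟨hgW, hg⟩ => ?_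
    exact Polynomial.eq_zero_of_degree_lt_of_eval_finset_eq_zero s
      (Polynomial.mem_degreeLT.mp hg) (hs g hgW)
  have hsup : W ⊔ Polynomial.degreeLT F #s ≤ Polynomial.degreeLT F n :=
    sup_le hW (Polynomial.degreeLT_mono hsn)
  have : FiniteDimensional F W := Submodule.finiteDimensional_of_le hW
  have hsum := Submodule.finrank_sup_add_finrank_inf_eq W (Polynomial.degreeLT F #s)
  rw [hinf, finrank_bot, add_zero, hdim] at hsum
  rw [← hsum, ← hdim n]
  exact Submodule.finrank_mono hsup

theorem finrank_map_restrictLine_le {P Q : σ → F} (hPQ : P ≠ Q) {d : ℕ} {T : Finset (σ → F)}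
    (hk : #{x ∈ T | x ∈ line[F, P, Q]} ≤ d + 1) :
    finrank F ((vanishingSpace d T).map (restrictLine P Q).toLinearMap) +
      #{x ∈ T | x ∈ line[F, P, Q]} ≤ d + 1 := by
  obtain ⟨s, hcard, hs⟩ := exists_finset_card_eq_forall_lineMap_mem hPQ T
  rw [← hcard] at hk ⊢
  refine finrank_add_card_le_of_forall_eval_eq_zero ?_ ?_ hk
  · rintro _ ⟨f, hf, rfl⟩
    rw [Polynomial.degreeLT_succ_eq_degreeLE, Polynomial.mem_degreeLE]
    exact Polynomial.degree_le_of_natDegree_le <|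
      (natDegree_restrictLine_le P Q f).trans (mem_vanishingSpace.mp hf).1
  · rintro _ ⟨f, hf, rfl⟩ t ht
    exact (eval_restrictLine P Q f t).trans ((mem_vanishingSpace.mp hf).2 _ (hs t ht))

theorem exists_line_forall_collinear_card_le {T : Finset (σ → F)} (hT : 1 < #T) :
    ∃ P ∈ T, ∃ Q ∈ T, P ≠ Q ∧ ∀ A ⊆ T, Collinear F (A : Set (σ → F)) →
      #A ≤ #{x ∈ T | x ∈ line[F, P, Q]} := by
  obtain ⟨P₀, hP₀, Q₀, hQ₀, hne₀⟩ := Finset.one_lt_card.mp hT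
  let collinearSubsets : Finset (Finset (σ → F)) :=
    T.powerset.filter fun A => Collinear F (A : Set (σ → F))
  have hpair : {P₀, Q₀} ∈ collinearSubsets := by
    simp [collinearSubsets, Finset.insert_subset_iff, hP₀, hQ₀, collinear_pair]
  obtain ⟨M, hM, hmax⟩ := Finset.exists_max_image collinearSubsets Finset.card ⟨_, hpair⟩
  obtain ⟨hMT, hMcol⟩ := Finset.mem_filter.mp hM
  rw [Finset.mem_powerset] at hMT
  obtain ⟨P, hP, Q, hQ, hne⟩ := Finset.one_lt_card.mp
    (Finset.one_lt_card.mpr ⟨P₀, by simp, Q₀, by simp, hne₀⟩ |>.trans_le (hmax _ hpair))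
  refine ⟨P, hMT hP, Q, hMT hQ, hne, fun A hAT hA => ?_⟩
  refine (hmax A (Finset.mem_filter.mpr ⟨Finset.mem_powerset.mpr hAT, hA⟩)).trans ?_
  exact Finset.card_le_card fun x hx => Finset.mem_filter.mpr
    ⟨hMT hx, hMcol.mem_affineSpan_of_mem_of_ne hP hQ hx hne⟩

theorem collinear_filter_mem_line (T : Finset (σ → F)) (P Q : σ → F) :
    Collinear F (({x ∈ T | x ∈ line[F, P, Q]} : Finset (σ → F)) : Set (σ → F)) := by
  refine (collinear_iff_exists_forall_eq_smul_vadd _).mpr ⟨P, Q - P, fun x hx => ?_⟩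
  obtain ⟨t, rfl⟩ := mem_affineSpan_pair_iff_exists_lineMap_eq.mp (Finset.mem_filter.mp hx).2
  exact ⟨t, AffineMap.lineMap_apply P Q t⟩

end RestrictionToLine

section Plane

variable {F : Type*} [Field F] {T : Finset (Fin 2 → F)} {P Q : Fin 2 → F}

/-- The linear polynomial cutting out the line through `P` and `Q`; it is `0` when `P = Q`. -/
def lineEquation (P Q : Fin 2 → F) : MvPolynomial (Fin 2) F :=
  C (Q 1 - P 1) * (X 0 - C (P 0)) - C (Q 0 - P 0) * (X 1 - C (P 1))

theorem eval_lineEquation (P Q x : Fin 2 → F) :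
    eval x (lineEquation P Q) = (Q 1 - P 1) * (x 0 - P 0) - (Q 0 - P 0) * (x 1 - P 1) := by
  simp [lineEquation]

theorem totalDegree_lineEquation_le (P Q : Fin 2 → F) : (lineEquation P Q).totalDegree ≤ 1 := by
  refine (totalDegree_sub _ _).trans (max_le ?_ ?_) <;>
  · refine (totalDegree_mul _ _).trans ?_
    rw [totalDegree_C, zero_add]
    exact totalDegree_X_sub_C_le _ _

theorem exists_mul_sub_add_mul_sub_eq_one (hPQ : P ≠ Q) :
    ∃ a b : F, a * (Q 0 - P 0) + b * (Q 1 - P 1) = 1 := by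
  obtain ⟨i, hi⟩ := Function.ne_iff.mp hPQ.symm
  have hne := sub_ne_zero.mpr hi
  fin_cases i
  · exact ⟨(Q 0 - P 0)⁻¹, 0, by simpa using inv_mul_cancel₀ hne⟩
  · exact ⟨0, (Q 1 - P 1)⁻¹, by simpa using inv_mul_cancel₀ hne⟩

theorem eval_lineEquation_eq_zero_iff (hPQ : P ≠ Q) {x : Fin 2 → F} :
    eval x (lineEquation P Q) = 0 ↔ x ∈ line[F, P, Q] := by
  rw [eval_lineEquation, mem_affineSpan_pair_iff_exists_lineMap_eq]
  constructor
  · intro hx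
    obtain ⟨a, b, hab⟩ := exists_mul_sub_add_mul_sub_eq_one hPQ
    refine ⟨a * (x 0 - P 0) + b * (x 1 - P 1), ?_⟩
    ext i
    fin_cases i <;>
      simp only [AffineMap.lineMap_apply, vsub_eq_sub, vadd_eq_add, Pi.add_apply, Pi.smul_apply,
        Pi.sub_apply, smul_eq_mul, Fin.zero_eta, Fin.mk_one]
    · linear_combination (x 0 - P 0) * hab - b * hx
    · linear_combination (x 1 - P 1) * hab + a * hx
  · rintro ⟨t, rfl⟩
    simp only [AffineMap.lineMap_apply, vsub_eq_sub, vadd_eq_add, Pi.add_apply, Pi.smul_apply,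
      Pi.sub_apply, smul_eq_mul]
    ring

theorem lineEquation_ne_zero (hPQ : P ≠ Q) : lineEquation P Q ≠ 0 := by
  obtain ⟨a, b, hab⟩ := exists_mul_sub_add_mul_sub_eq_one hPQ
  intro h0
  have heval := eval_lineEquation P Q ![P 0 + b, P 1 - a]
  simp only [h0, map_zero, Matrix.cons_val_zero, Matrix.cons_val_one] at heval
  exact one_ne_zero (α := F) (by linear_combination -hab - heval)

theorem totalDegree_lineEquation (hPQ : P ≠ Q) : (lineEquation P Q).totalDegree = 1 :=
  (totalDegree_lineEquation_le P Q).antisymm <|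
    totalDegree_pos_of_eval_eq_zero (lineEquation_ne_zero hPQ) (x := P)
      (by simp [eval_lineEquation])

/-- Modulo the equation of the line, the affine function `s` with `s(P) = 0` and `s(Q) = 1` inverts
the parametrisation. -/
theorem lineEquation_dvd_of_restrictLine_eq_zero (hPQ : P ≠ Q) {f : MvPolynomial (Fin 2) F}
    (hf : restrictLine P Q f = 0) : lineEquation P Q ∣ f := by
  obtain ⟨a, b, hab⟩ := exists_mul_sub_add_mul_sub_eq_one hPQ
  let π := Ideal.Quotient.mkₐ F (Ideal.span {lineEquation P Q})
  let s : MvPolynomial (Fin 2) F := C a * (X 0 - C (P 0)) + C b * (X 1 - C (P 1))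
  have hab' : (C a * (C (Q 0) - C (P 0)) + C b * (C (Q 1) - C (P 1)) : MvPolynomial (Fin 2) F)
      = 1 := by
    simpa using congrArg (C (σ := Fin 2)) hab
  have hparam (i : Fin 2) : lineEquation P Q ∣ C (Q i - P i) * s + C (P i) - X i := by
    fin_cases i
    · refine ⟨-C b, ?_⟩
      simp only [s, lineEquation, C_sub, Fin.zero_eta]
      linear_combination (X 0 - C (P 0)) * hab'
    · refine ⟨C a, ?_⟩
      simp only [s, lineEquation, C_sub, Fin.mk_one]
      linear_combination (X 1 - C (P 1)) * hab'
  have hinverse : (Polynomial.aeval (π s)).comp (restrictLine P Q) = π := by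
    ext i
    have hi : π (C (Q i - P i) * s + C (P i)) = π (X i) :=
      Ideal.Quotient.eq.mpr (Ideal.mem_span_singleton.mpr (hparam i))
    rw [← hi]
    simp only [AlgHom.comp_apply, restrictLine, aeval_X, map_add, map_mul, Polynomial.aeval_C,
      Polynomial.aeval_X, ← algebraMap_eq, AlgHom.commutes]
  have hπ : π f = 0 := by rw [← hinverse, AlgHom.comp_apply, hf, map_zero]
  exact Ideal.mem_span_singleton.mp (Ideal.Quotient.eq_zero_iff_mem.mp hπ)

theorem vanishingSpace_inf_ker_restrictLine_le (hPQ : P ≠ Q) (d : ℕ) :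
    vanishingSpace (d + 1) T ⊓ LinearMap.ker (restrictLine P Q).toLinearMap ≤
      (vanishingSpace d {x ∈ T | x ∉ line[F, P, Q]}).map
        (LinearMap.mulLeft F (lineEquation P Q)) := by
  rintro f ⟨hf, hker⟩
  obtain ⟨hdeg, hzero⟩ := mem_vanishingSpace.mp hf
  obtain ⟨g, rfl⟩ := lineEquation_dvd_of_restrictLine_eq_zero hPQ hker
  refine ⟨g, mem_vanishingSpace.mpr ⟨?_, fun x hx => ?_⟩, rfl⟩
  · rcases eq_or_ne g 0 with rfl | hg
    · simp
    · rw [totalDegree_mul_of_isDomain (lineEquation_ne_zero hPQ) hg,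
        totalDegree_lineEquation hPQ] at hdeg
      omega
  · obtain ⟨hxT, hx⟩ := Finset.mem_filter.mp hx
    have hmul := hzero x hxT
    rw [map_mul, mul_eq_zero, eval_lineEquation_eq_zero_iff hPQ] at hmul
    exact hmul.resolve_left hx

theorem card_le_totalDegree_of_collinear {f : MvPolynomial (Fin 2) F} (hf : Irreducible f)
    (hdeg : 1 < f.totalDegree) (hT : ∀ x ∈ T, eval x f = 0)
    (hcol : Collinear F (T : Set (Fin 2 → F))) : #T ≤ f.totalDegree := by
  by_contra! hlt
  obtain ⟨P, hP, Q, hQ, hPQ⟩ := Finset.one_lt_card.mp (hdeg.trans hlt)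
  have hline : {x ∈ T | x ∈ line[F, P, Q]} = T :=
    Finset.filter_true_of_mem fun x hx => hcol.mem_affineSpan_of_mem_of_ne hP hQ hx hPQ
  have hrestrict : restrictLine P Q f = 0 := by
    by_contra hne
    have := card_le_totalDegree_of_restrictLine_ne_zero hPQ hT hne
    rw [hline] at this
    exact hlt.not_ge this
  exact not_dvd_of_irreducible hf ((totalDegree_lineEquation hPQ).trans_lt hdeg) (x := P)
    (by simp [eval_lineEquation]) (lineEquation_dvd_of_restrictLine_eq_zero hPQ hrestrict)

namespace ImposesIndependentConditions

theorem of_residual (hPQ : P ≠ Q) {d : ℕ} (hk : #{x ∈ T | x ∈ line[F, P, Q]} ≤ d + 2)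
    (h : ImposesIndependentConditions d {x ∈ T | x ∉ line[F, P, Q]}) :
    ImposesIndependentConditions (d + 1) T := by
  have hrank := finrank_map_add_finrank_inf_ker (vanishingSpace (d + 1) T)
    (restrictLine P Q).toLinearMap
  have hmap := finrank_map_restrictLine_le hPQ hk
  have hker := (Submodule.finrank_mono (vanishingSpace_inf_ker_restrictLine_le hPQ d)).trans
    (Submodule.finrank_map_le (LinearMap.mulLeft F (lineEquation P Q))
      (vanishingSpace d {x ∈ T | x ∉ line[F, P, Q]}))
  have hcard := T.card_filter_add_card_filter_not (· ∈ line[F, P, Q])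
  have hchoose : (d + 3).choose 2 = (d + 2) + (d + 2).choose 2 := by
    rw [Nat.choose_succ_succ' (d + 2) 1, Nat.choose_one_right]
  refine of_le ?_
  rw [ImposesIndependentConditions] at h
  rw [finrank_restrictTotalDegree, Fintype.card_fin] at h ⊢
  rw [show d + 1 + 2 = d + 3 by rfl, hchoose]
  omega

theorem of_card_le {d : ℕ} (hT : #T ≤ 2 * d + 1)
    (hcol : ∀ A ⊆ T, Collinear F (A : Set (Fin 2 → F)) → #A ≤ d + 1) :
    ImposesIndependentConditions d T := by
  induction d generalizing T with
  | zero => exact of_card_le_one 0 hT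
  | succ d ih =>
    rcases le_or_gt #T 1 with hT1 | hT1
    · exact of_card_le_one _ hT1
    obtain ⟨P, hP, Q, hQ, hPQ, hmax⟩ := exists_line_forall_collinear_card_le hT1
    have hk := hcol _ (Finset.filter_subset _ T) (collinear_filter_mem_line T P Q)
    have hcard := T.card_filter_add_card_filter_not (· ∈ line[F, P, Q])
    have hk2 := hmax {P, Q} (by simp [Finset.insert_subset_iff, hP, hQ])
      (by simpa using collinear_pair F P Q)
    rw [Finset.card_pair hPQ] at hk2
    refine of_residual hPQ hk (ih (by omega) fun A hA hAcol => ?_)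
    have := hmax A (hA.trans (Finset.filter_subset _ T)) hAcol
    have := Finset.card_le_card hA
    omega

theorem of_card_le_eight_of_three_le_card_line (hT : #T ≤ 8) (hPQ : P ≠ Q)
    (hcol : ∀ A ⊆ T, Collinear F (A : Set (Fin 2 → F)) →
      #A ≤ #{x ∈ T | x ∈ line[F, P, Q]})
    (hlow : 3 ≤ #{x ∈ T | x ∈ line[F, P, Q]}) (hhigh : #{x ∈ T | x ∈ line[F, P, Q]} ≤ 4)
    (hconic : vanishingSpace 2 T = ⊥) : ImposesIndependentConditions 3 T := by
  have hcard := T.card_filter_add_card_filter_not (· ∈ line[F, P, Q])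
  refine of_residual hPQ hhigh (of_card_le (by omega) fun A hA hAcol => ?_)
  by_contra! hA4
  have hAk := hcol A (hA.trans (Finset.filter_subset _ T)) hAcol
  have hAeq : A = {x ∈ T | x ∉ line[F, P, Q]} := Finset.eq_of_subset_of_card_le hA (by omega)
  obtain ⟨R, hR, R', hR', hRR'⟩ := Finset.one_lt_card.mp (show 1 < #A by omega)
  have htwoLines : lineEquation P Q * lineEquation R R' ∈ vanishingSpace (1 + 1) T := by
    refine mul_mem_vanishingSpace (totalDegree_lineEquation_le P Q)
      (totalDegree_lineEquation_le R R') fun x hx => ?_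
    rw [eval_lineEquation_eq_zero_iff hPQ, eval_lineEquation_eq_zero_iff hRR']
    refine or_iff_not_imp_left.mpr fun hxl => ?_
    exact hAcol.mem_affineSpan_of_mem_of_ne hR hR' (hAeq ▸ Finset.mem_filter.mpr ⟨hx, hxl⟩) hRR'
  exact mul_ne_zero (lineEquation_ne_zero hPQ) (lineEquation_ne_zero hRR')
    ((Submodule.mem_bot F).mp (hconic.le htwoLines))

theorem of_card_le_eight_of_no_three_collinear (hT : #T ≤ 8)
    (hcol : ∀ A ⊆ T, Collinear F (A : Set (Fin 2 → F)) → #A ≤ 2)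
    (hP : P ∈ T) (hQ : Q ∈ T) (hPQ : P ≠ Q) (hconic : vanishingSpace 2 T = ⊥) :
    ImposesIndependentConditions 3 T := by
  have hpair : {P, Q} ⊆ T := by simp [Finset.insert_subset_iff, hP, hQ]
  have hk := hcol _ (Finset.filter_subset _ T) (collinear_filter_mem_line T P Q)
  have hline : {P, Q} = ({x ∈ T | x ∈ line[F, P, Q]} : Finset (Fin 2 → F)) := by
    refine Finset.eq_of_subset_of_card_le ?_ (hk.trans (Finset.card_pair hPQ).ge)
    simp [Finset.insert_subset_iff, hP, hQ, left_mem_affineSpan_pair, right_mem_affineSpan_pair]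
  have herase (R) (hR : R ∈ T) : ImposesIndependentConditions 3 (T.erase R) :=
    of_card_le (by rw [Finset.card_erase_of_mem hR]; omega) fun A hA hAcol =>
      (hcol A (hA.trans (Finset.erase_subset R T)) hAcol).trans (by norm_num)
  by_contra hnot
  have hbot : vanishingSpace 2 (T \ {P, Q}) = ⊥ := (Submodule.eq_bot_iff _).mpr fun c hc =>
    (Submodule.mem_bot F).mp <|
      hconic.le (mem_vanishingSpace_of_erase hP hQ hPQ (herase P hP) (herase Q hQ) hnot hc)
  have hresidual : ImposesIndependentConditions 2 (T \ {P, Q}) := by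
    refine of_vanishingSpace_eq_bot hbot ?_
    rw [finrank_restrictTotalDegree, Fintype.card_fin, Finset.card_sdiff_of_subset hpair,
      Finset.card_pair hPQ]
    exact Nat.sub_le_of_le_add hT
  refine hnot (of_residual hPQ (hk.trans (by norm_num)) ?_)
  rwa [Finset.filter_not, ← hline]

theorem of_card_le_eight (hT : #T ≤ 8)
    (hcol : ∀ A ⊆ T, Collinear F (A : Set (Fin 2 → F)) → #A ≤ 4)
    (hconic : vanishingSpace 2 T = ⊥) : ImposesIndependentConditions 3 T := by
  rcases le_or_gt #T 7 with hT7 | hT7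
  · exact of_card_le hT7 hcol
  obtain ⟨P, hP, Q, hQ, hPQ, hmax⟩ := exists_line_forall_collinear_card_le (T := T) (by omega)
  rcases Nat.lt_or_ge #{x ∈ T | x ∈ line[F, P, Q]} 3 with hlt | hge
  · exact of_card_le_eight_of_no_three_collinear hT
      (fun A hA hAcol => (hmax A hA hAcol).trans (Nat.le_of_lt_succ hlt)) hP hQ hPQ hconic
  · exact of_card_le_eight_of_three_le_card_line hT hPQ hmax hge
      (hcol _ (Finset.filter_subset _ T) (collinear_filter_mem_line T P Q)) hconic

end ImposesIndependentConditions

theorem vanishingSpace_two_eq_bot_of_irreducible_cubic {f : MvPolynomial (Fin 2) F}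
    (hf : Irreducible f) (hdeg : f.totalDegree = 3) (hT : ∀ x ∈ T, eval x f = 0)
    (hcard : 7 ≤ #T) : vanishingSpace 2 T = ⊥ := by
  obtain ⟨A, hAT, hA⟩ := Finset.exists_subset_card_eq hcard
  have hindep : ImposesIndependentConditions (2 + 1) A :=
    .of_card_le hA.le fun B hB hBcol =>
      (card_le_totalDegree_of_collinear hf (by omega) (fun x hx => hT x (hAT (hB hx))) hBcol).trans
        (by omega)
  obtain ⟨x, hx⟩ := Finset.card_pos.mp (show 0 < #A by omega)
  refine (Submodule.eq_bot_iff _).mpr fun c hc => by_contra fun hc0 => ?_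
  obtain ⟨hcdeg, hczero⟩ := mem_vanishingSpace.mp hc
  refine not_dvd_of_irreducible hf (by omega) (hczero x (hAT hx)) ?_
  refine hindep.dvd ?_ hc0 (vanishingSpace_anti hAT hc)
    (mem_vanishingSpace.mpr ⟨hdeg.le, fun y hy => hT y (hAT hy)⟩)
  rw [finrank_restrictTotalDegree, finrank_restrictTotalDegree, hA]
  rfl

theorem vanishing_space_of_eight_on_irreducible_cubic_general {f : MvPolynomial (Fin 2) F}
    (hf : Irreducible f) (hdeg : f.totalDegree = 3) (hT : ∀ x ∈ T, eval x f = 0)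
    (hcard : #T = 8) : finrank F (vanishingSpace 3 T) = 2 := by
  have hindep : ImposesIndependentConditions 3 T :=
    .of_card_le_eight hcard.le
      (fun A hA hAcol => (card_le_totalDegree_of_collinear hf (by omega)
        (fun x hx => hT x (hA hx)) hAcol).trans (by omega))
      (vanishingSpace_two_eq_bot_of_irreducible_cubic hf hdeg hT (by omega))
  rw [ImposesIndependentConditions, finrank_restrictTotalDegree, Fintype.card_fin, hcard] at hindep
  exact Nat.add_right_cancel hindep

end Plane

theorem vanishing_space_of_eight_on_irreducible_cubic
    (p : ℕ) [Fact p.Prime] (S : Finset (Fin 2 → ZMod p)) (hS : S.card = 7)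
    (q : Fin 2 → ZMod p) (hq : q ∉ S)
    (h : ∃ γ : Set (Fin 2 → ZMod p), IsIrredCubic γ ∧ q ∈ γ ∧ ∀ x ∈ S, x ∈ γ) :
    Module.finrank (ZMod p) (vanishingCubics p (insert q S)) = 2 := by
  obtain ⟨_, ⟨f, hf, hdeg, rfl⟩, hqf, hSf⟩ := h
  exact vanishing_space_of_eight_on_irreducible_cubic_general hf hdeg
    ((Finset.forall_mem_insert q S _).mpr ⟨hqf, hSf⟩) (by rw [Finset.card_insert_of_notMem hq, hS])
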